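/- Let r ≥ 1 and let H be an r-tree (that is, a K_{r+1}-decomposable graph). Then for every η > 0 there exists ρ > 0 and n₀ such that for every d ∈ (0,1] and every (ρ,d)-dense graph G with at least n₀ vertices, t_H(G) ≥ d^{|E(H)|} − η. -/

import Mathlib

open MeasureTheory

/-- The homomorphism density `t_H(G)`. -/
noncomputable def homDensity {α β : Type*} [Fintype α] [Fintype β]
    (H : SimpleGraph α) (G : SimpleGraph β) : ℝ :=
  (Nat.card (H →g G) : ℝ) / (Fintype.card β : ℝ) ^ (Fintype.card α)

/-- The number of edges of a graph. -/
noncomputable def edgeCount {α : Type*} (H : SimpleGraph α) : ℕ :=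
  Nat.card H.edgeSet

/-- `G` is `(ρ,d)`-dense: every vertex subset `X` with `|X| ≥ ρ|V(G)|`
spans at least `(d/2)|X|²` edges. -/
def LocallyDense {β : Type*} [Fintype β] (G : SimpleGraph β) (ρ d : ℝ) : Prop :=
  ∀ X : Finset β, ρ * (Fintype.card β : ℝ) ≤ (X.card : ℝ) →
    d / 2 * (X.card : ℝ) ^ 2 ≤
      (Nat.card {e : Sym2 β // e ∈ G.edgeSet ∧ ∀ v ∈ e, v ∈ X} : ℝ)

/-- `(bag, T)` is a tree decomposition of `H`. -/
def IsTreeDecomp {α ι : Type*} [DecidableEq α] (H : SimpleGraph α) (bag : ι → Finset α)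
    (T : SimpleGraph ι) : Prop :=
  T.IsTree ∧
  (∀ v : α, ∃ X, v ∈ bag X) ∧
  (∀ u v : α, H.Adj u v → ∃ X, u ∈ bag X ∧ v ∈ bag X) ∧
  (∀ X Y Z : ι, ∀ p : T.Walk X Y, p.IsPath → Z ∈ p.support →
    bag X ∩ bag Y ⊆ bag Z)

/-- `(bag, T)` is a `J`-decomposition of `H`: a tree decomposition in which every
bag induces a copy of `J`, and for adjacent bags there is an isomorphism between the
induced copies of `J` fixing the intersection pointwise. -/
def IsJDecomp {α ι γ : Type*} [DecidableEq α] (H : SimpleGraph α) (J : SimpleGraph γ)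
    (bag : ι → Finset α) (T : SimpleGraph ι) : Prop :=
  IsTreeDecomp H bag T ∧
  (∀ X : ι, Nonempty (H.induce ↑(bag X) ≃g J)) ∧
  (∀ X Y : ι, T.Adj X Y → ∃ e : H.induce ↑(bag X) ≃g H.induce ↑(bag Y),
      ∀ (v : α) (h1 : v ∈ bag X) (h2 : v ∈ bag Y),
        ((e ⟨v, h1⟩ : ↑(bag Y)) : α) = v)

/-- `H` is `J`-decomposable. -/
def JDecomposable {α γ : Type*} [DecidableEq α] (H : SimpleGraph α) (J : SimpleGraph γ) : Prop :=
  ∃ (ι : Type) (_ : Fintype ι) (bag : ι → Finset α) (T : SimpleGraph ι),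
    IsJDecomp H J bag T

/-!
Glue uniformly random cliques of `G`, one for each bag, along the tree so that each new clique is
conditionally independent of the earlier ones given the vertices they share. The result is a random
homomorphism from `H` to `G`. By Jensen's inequality the homomorphism density is at least
`exp (-D)`, where `D` is the divergence of this random homomorphism from a uniformly random map, and
`D` is additive over the bags up to the contribution of the shared vertices. Local density and the
Cauchy–Schwarz inequality show that extending a clique on `k` vertices by one more costs a factor of
about `d ^ k`, that is, a factor `d` for each new edge; hence `D` is at most about `e(H) log (1/d)`.
-/

open Finset Function
open scoped BigOperators

section ConditionalAverage

variable {ι : Type*} {Ω : ι → Type*} [Fintype ι] [DecidableEq ι] [∀ i, Fintype (Ω i)]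

/-- The conditional expectation of `h`, on a finite product space with the uniform measure, given
the coordinates in `S`: the remaining coordinates are resampled from a second point `y`. -/
noncomputable def condAvg (S : Finset ι) (h : (∀ i, Ω i) → ℝ) : (∀ i, Ω i) → ℝ :=
  fun x ↦ 𝔼 y, h (S.piecewise x y)

lemma dependsOn_condAvg (S : Finset ι) (h : (∀ i, Ω i) → ℝ) : DependsOn (condAvg S h) S :=
  fun _ _ hxy ↦ expect_congr rfl fun _ _ ↦
    congrArg h (S.piecewise_congr (fun i hi ↦ hxy i hi) fun _ _ ↦ rfl)

lemma condAvg_nonneg (S : Finset ι) {h : (∀ i, Ω i) → ℝ} (hh : 0 ≤ h) : 0 ≤ condAvg S h :=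
  fun _ ↦ expect_nonneg fun _ _ ↦ hh _

lemma eq_zero_of_condAvg_eq_zero {S : Finset ι} {h : (∀ i, Ω i) → ℝ} (hh : 0 ≤ h)
    {x : ∀ i, Ω i} (hx : condAvg S h x = 0) : h x = 0 := by
  have hzero := (expect_eq_zero_iff_of_nonneg fun y _ ↦ hh (S.piecewise x y)).1 hx x (mem_univ x)
  rwa [piecewise_same] at hzero

lemma condAvg_smul (S : Finset ι) (c : ℝ) (h : (∀ i, Ω i) → ℝ) :
    condAvg S (c • h) = c • condAvg S h :=
  funext fun _ ↦ (mul_expect ..).symm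

lemma condAvg_mul_of_dependsOn {S : Finset ι} {k : (∀ i, Ω i) → ℝ} (hk : DependsOn k S)
    (h : (∀ i, Ω i) → ℝ) : condAvg S (k * h) = k * condAvg S h := by
  funext x
  have hkx (y : ∀ i, Ω i) : k (S.piecewise x y) = k x :=
    hk fun i hi ↦ S.piecewise_eq_of_mem x y hi
  simp only [condAvg, Pi.mul_apply, hkx, mul_expect]

variable [∀ i, Nonempty (Ω i)]

lemma condAvg_of_dependsOn {S : Finset ι} {h : (∀ i, Ω i) → ℝ} (hh : DependsOn h S) :
    condAvg S h = h := by
  funext x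
  have hhx (y : ∀ i, Ω i) : h (S.piecewise x y) = h x :=
    hh fun i hi ↦ S.piecewise_eq_of_mem x y hi
  simp only [condAvg, hhx, Fintype.expect_const]

lemma expect_condAvg (S : Finset ι) (h : (∀ i, Ω i) → ℝ) : 𝔼 x, condAvg S h x = 𝔼 x, h x := by
  have hswap : 𝔼 p : (∀ i, Ω i) × (∀ i, Ω i), h (S.piecewise p.1 p.2) =
      𝔼 p : (∀ i, Ω i) × (∀ i, Ω i), h p.1 := by
    refine expect_nbij' (fun p ↦ (S.piecewise p.1 p.2, S.piecewise p.2 p.1))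
      (fun p ↦ (S.piecewise p.1 p.2, S.piecewise p.2 p.1)) ?_ ?_ ?_ ?_ ?_ <;>
      simp [piecewise_same]
  simp only [← univ_product_univ, expect_product, Fintype.expect_const] at hswap
  exact hswap

lemma condAvg_condAvg (S T : Finset ι) (h : (∀ i, Ω i) → ℝ) :
    condAvg S (condAvg T h) = condAvg (S ∩ T) h := by
  funext x
  have hmix (y z : ∀ i, Ω i) : T.piecewise (S.piecewise x y) z =
      (S ∩ T).piecewise x (T.piecewise y z) := by
    ext i
    by_cases hS : i ∈ S <;> by_cases hT : i ∈ T <;> simp [hS, hT]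
  simp only [condAvg, hmix]
  exact expect_condAvg T fun w ↦ h ((S ∩ T).piecewise x w)

lemma condAvg_condAvg_of_subset {S T : Finset ι} (hST : S ⊆ T) (h : (∀ i, Ω i) → ℝ) :
    condAvg S (condAvg T h) = condAvg S h := by
  rw [condAvg_condAvg, inter_eq_left.2 hST]

lemma condAvg_inter_of_dependsOn (S : Finset ι) {T : Finset ι} {h : (∀ i, Ω i) → ℝ}
    (hh : DependsOn h T) : condAvg (S ∩ T) h = condAvg S h := by
  rw [← condAvg_condAvg, condAvg_of_dependsOn hh]

lemma expect_mul_of_dependsOn {S : Finset ι} {k : (∀ i, Ω i) → ℝ} (hk : DependsOn k S)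
    (h : (∀ i, Ω i) → ℝ) : 𝔼 x, h x * k x = 𝔼 x, condAvg S h x * k x := by
  rw [← expect_condAvg S fun x ↦ h x * k x]
  have hpull := condAvg_mul_of_dependsOn hk h
  rw [mul_comm, mul_comm k] at hpull
  exact expect_congr rfl fun x _ ↦ congrFun hpull x

lemma expect_update (i : ι) (h : (∀ i, Ω i) → ℝ) :
    𝔼 b, 𝔼 x, h (update x i b) = 𝔼 x, h x := by
  have hswap : 𝔼 p : Ω i × (∀ i, Ω i), h (update p.2 i p.1) =
      𝔼 p : Ω i × (∀ i, Ω i), h p.2 := by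
    refine expect_nbij' (fun p ↦ (p.2 i, update p.2 i p.1))
      (fun p ↦ (p.2 i, update p.2 i p.1)) ?_ ?_ ?_ ?_ ?_ <;> simp
  simpa only [← univ_product_univ, expect_product, Fintype.expect_const] using hswap

end ConditionalAverage

section RelativeEntropy

/-- The Kullback–Leibler divergence `D(f μ ‖ μ)`, where `μ` is the uniform measure on a finite
type and `f` a density with respect to `μ`. -/
noncomputable def relEntropy {Ω : Type*} [Fintype Ω] (f : Ω → ℝ) : ℝ :=
  𝔼 x, f x * Real.log (f x)

-- Jensen's inequality for `exp` and the weights `f x / |Ω|`, at the points `-log (f x)`.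
lemma exp_neg_relEntropy_le {Ω : Type*} [Fintype Ω] {f : Ω → ℝ} (hf : 0 ≤ f)
    (hf1 : 𝔼 x, f x = 1) {B : Set Ω} (hB : support f ⊆ B) :
    Real.exp (-relEntropy f) ≤ 𝔼 x, B.indicator (1 : Ω → ℝ) x := by
  simp only [relEntropy, Fintype.expect_eq_sum_div_card, sum_div] at hf1 ⊢
  have hjensen := convexOn_exp.map_sum_le (t := univ) (w := fun x ↦ f x / Fintype.card Ω)
    (p := fun x ↦ -Real.log (f x)) (fun x _ ↦ div_nonneg (hf x) (Nat.cast_nonneg _)) hf1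
    fun x _ ↦ Set.mem_univ _
  calc Real.exp (-∑ x, f x * Real.log (f x) / Fintype.card Ω)
      = Real.exp (∑ x, (f x / Fintype.card Ω) • -Real.log (f x)) := by
        rw [← sum_neg_distrib]
        congr! 2 with x
        rw [smul_eq_mul]
        ring
    _ ≤ ∑ x, (f x / Fintype.card Ω) • Real.exp (-Real.log (f x)) := hjensen
    _ ≤ ∑ x, B.indicator (1 : Ω → ℝ) x / Fintype.card Ω := by
        refine sum_le_sum fun x _ ↦ ?_
        rw [smul_eq_mul, div_mul_eq_mul_div]
        gcongr
        rcases (hf x).eq_or_lt with hx | hx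
        · rw [← hx, Pi.zero_apply, zero_mul]
          exact Set.indicator_nonneg (fun _ _ ↦ zero_le_one) x
        · rw [Real.exp_neg, Real.exp_log hx, mul_inv_cancel₀ hx.ne',
            Set.indicator_of_mem (hB hx.ne'), Pi.one_apply]

end RelativeEntropy

section Gluing

variable {ι : Type*} {Ω : ι → Type*} [Fintype ι] [DecidableEq ι] [∀ i, Fintype (Ω i)]
  {U X : Finset ι} {f g : (∀ i, Ω i) → ℝ}

/-- The density `f · g / m`, where `m` is the marginal of `f` on the coordinates in `S`: it couples
the laws `f` and `g` so that they are conditionally independent given these coordinates. Where `m`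
vanishes so does `f`, and the value is `0`. -/
noncomputable def glue (S : Finset ι) (f g : (∀ i, Ω i) → ℝ) : (∀ i, Ω i) → ℝ :=
  f * g * (condAvg S f)⁻¹

lemma glue_comm {S : Finset ι} (h : condAvg S f = condAvg S g) : glue S f g = glue S g f := by
  rw [glue, glue, h, mul_comm f]

lemma glue_nonneg (S : Finset ι) (hf : 0 ≤ f) (hg : 0 ≤ g) : 0 ≤ glue S f g :=
  fun x ↦ mul_nonneg (mul_nonneg (hf x) (hg x)) (inv_nonneg.2 (condAvg_nonneg S hf x))

lemma dependsOn_glue (hf : DependsOn f U) (hg : DependsOn g X) :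
    DependsOn (glue (U ∩ X) f g) ↑(U ∪ X) := by
  intro x y hxy
  simp only [glue, Pi.mul_apply, Pi.inv_apply]
  rw [hf.mono (coe_subset.2 subset_union_left) hxy, hg.mono (coe_subset.2 subset_union_right) hxy,
    (dependsOn_condAvg (U ∩ X) f).mono
      (coe_subset.2 (inter_subset_left.trans subset_union_left)) hxy]

variable [∀ i, Nonempty (Ω i)]

lemma condAvg_glue_left (hf0 : 0 ≤ f) (hf : DependsOn f U) (hg : DependsOn g X)
    (h : condAvg (U ∩ X) f = condAvg (U ∩ X) g) : condAvg U (glue (U ∩ X) f g) = f := by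
  have hk : DependsOn (f * (condAvg (U ∩ X) f)⁻¹) U := fun x y hxy ↦ by
    simp only [Pi.mul_apply, Pi.inv_apply]
    rw [hf hxy, (dependsOn_condAvg (U ∩ X) f).mono (coe_subset.2 inter_subset_left) hxy]
  have hmarginal : condAvg U g = condAvg (U ∩ X) f := by rw [h, condAvg_inter_of_dependsOn U hg]
  rw [glue, mul_right_comm, condAvg_mul_of_dependsOn hk, hmarginal]
  funext x
  simp only [Pi.mul_apply, Pi.inv_apply]
  by_cases hx : condAvg (U ∩ X) f x = 0
  · simp only [eq_zero_of_condAvg_eq_zero hf0 hx, zero_mul]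
  · exact inv_mul_cancel_right₀ hx (f x)

lemma condAvg_glue_right (hg0 : 0 ≤ g) (hf : DependsOn f U) (hg : DependsOn g X)
    (h : condAvg (U ∩ X) f = condAvg (U ∩ X) g) : condAvg X (glue (U ∩ X) f g) = g := by
  rw [glue_comm h, inter_comm U X]
  rw [inter_comm U X] at h
  exact condAvg_glue_left hg0 hg hf h.symm

lemma relEntropy_glue (hf0 : 0 ≤ f) (hg0 : 0 ≤ g) (hf : DependsOn f U) (hg : DependsOn g X)
    (h : condAvg (U ∩ X) f = condAvg (U ∩ X) g) :
    relEntropy (glue (U ∩ X) f g) =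
      relEntropy f + relEntropy g - relEntropy (condAvg (U ∩ X) f) := by
  set m := condAvg (U ∩ X) f with hm
  set F := glue (U ∩ X) f g
  have hUF : condAvg U F = f := condAvg_glue_left hf0 hf hg h
  have hXF : condAvg X F = g := condAvg_glue_right hg0 hf hg h
  have hmF : condAvg (U ∩ X) F = m := by
    rw [hm, ← condAvg_condAvg_of_subset inter_subset_left, hUF]
  have hlog {S : Finset ι} {k : (∀ i, Ω i) → ℝ} (hk : DependsOn k S) :
      DependsOn (fun x ↦ Real.log (k x)) S := fun _ _ hxy ↦ congrArg Real.log (hk hxy)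
  have hsplit (x : ∀ i, Ω i) : F x * Real.log (F x) =
      F x * Real.log (f x) + F x * Real.log (g x) - F x * Real.log (m x) := by
    rcases eq_or_ne (F x) 0 with hx | hx
    · simp only [hx, zero_mul, add_zero, sub_zero]
    · have hFx : F x = f x * g x * (m x)⁻¹ := rfl
      have hfg : f x * g x ≠ 0 := left_ne_zero_of_mul (hFx ▸ hx)
      have hmx : (m x)⁻¹ ≠ 0 := right_ne_zero_of_mul (hFx ▸ hx)
      have hlogF : Real.log (F x) = Real.log (f x) + Real.log (g x) - Real.log (m x) := by
        rw [hFx, Real.log_mul hfg hmx,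
          Real.log_mul (left_ne_zero_of_mul hfg) (right_ne_zero_of_mul hfg), Real.log_inv]
        ring
      rw [hlogF]
      ring
  simp only [relEntropy, hsplit, expect_sub_distrib, expect_add_distrib]
  rw [expect_mul_of_dependsOn (hlog hf), expect_mul_of_dependsOn (hlog hg),
    expect_mul_of_dependsOn (hlog (dependsOn_condAvg (U ∩ X) f)), hUF, hXF, hmF]

end Gluing

section LocalDensity

variable {β : Type*} [Fintype β] {G : SimpleGraph β} {ρ d : ℝ}

open scoped Classical in
lemma LocallyDense.mul_sq_le_card_interedges (hG : LocallyDense G ρ d) {X : Finset β}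
    (hX : ρ * Fintype.card β ≤ #X) : d * (#X : ℝ) ^ 2 ≤ #(G.interedges X X) := by
  let K : SimpleGraph β :=
    { Adj b c := b ∈ X ∧ c ∈ X ∧ G.Adj b c
      symm := ⟨fun _ _ ⟨hb, hc, hbc⟩ ↦ ⟨hc, hb, hbc.symm⟩⟩
      loopless := ⟨fun _ hb ↦ hb.2.2.ne rfl⟩ }
  have hedges : Nat.card {e : Sym2 β // e ∈ G.edgeSet ∧ ∀ v ∈ e, v ∈ X} = #K.edgeFinset := by
    rw [Nat.card_eq_fintype_card, Fintype.card_subtype]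
    congr 1
    ext e
    induction e with | h b c => simp [K, and_comm, and_assoc]
  have hpairs : 2 * #K.edgeFinset = #(G.interedges X X) := by
    rw [SimpleGraph.two_mul_card_edgeFinset]
    congr 1
    ext p
    simp [K, SimpleGraph.mem_interedges_iff]
  have hdense := hG X hX
  rw [hedges] at hdense
  rw [← hpairs, Nat.cast_mul, Nat.cast_two]
  linarith

open scoped Classical in
lemma LocallyDense.mul_sq_sub_sq_le (hG : LocallyDense G ρ d) (hρ : 0 ≤ ρ) (hd : d ≤ 1)
    (X : Finset β) : d * (#X / Fintype.card β : ℝ) ^ 2 - ρ ^ 2 ≤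
      #(G.interedges X X) / (Fintype.card β : ℝ) ^ 2 := by
  rcases le_total (ρ * Fintype.card β) (#X : ℝ) with hX | hX
  · calc d * (#X / Fintype.card β : ℝ) ^ 2 - ρ ^ 2
        ≤ d * (#X : ℝ) ^ 2 / (Fintype.card β : ℝ) ^ 2 := by
          rw [div_pow, mul_div_assoc]
          exact sub_le_self _ (sq_nonneg ρ)
      _ ≤ #(G.interedges X X) / (Fintype.card β : ℝ) ^ 2 := by
          gcongr
          exact hG.mul_sq_le_card_interedges hX
  · have hXρ : (#X / Fintype.card β : ℝ) ≤ ρ := div_le_of_le_mul₀ (by positivity) hρ hX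
    calc d * (#X / Fintype.card β : ℝ) ^ 2 - ρ ^ 2
        ≤ 1 * ρ ^ 2 - ρ ^ 2 := by gcongr
      _ = 0 := by ring
      _ ≤ #(G.interedges X X) / (Fintype.card β : ℝ) ^ 2 := by positivity

end LocalDensity

section CliqueDensity

variable {α β : Type*} (G : SimpleGraph β) (S Q : Finset α)

/-- The indicator function of the maps `x : α → β` which are homomorphisms from the complete graph
on `S` to `G`, without constraint outside `S`. -/
noncomputable def cliqueIndicator : (α → β) → ℝ :=
  {x | (G.comap x).IsClique S}.indicator 1

lemma cliqueIndicator_nonneg : 0 ≤ cliqueIndicator G S :=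
  fun x ↦ Set.indicator_nonneg (fun _ _ ↦ zero_le_one) x

lemma cliqueIndicator_sq : cliqueIndicator G S ^ 2 = cliqueIndicator G S := by
  funext x
  by_cases hx : (G.comap x).IsClique S <;> simp [cliqueIndicator, hx]

lemma dependsOn_cliqueIndicator : DependsOn (cliqueIndicator G S) S := by
  intro x y hxy
  refine Set.indicator_eq_indicator ?_ rfl
  simp only [Set.mem_ofPred_eq, SimpleGraph.isClique_iff]
  refine forall₄_congr fun a ha b hb ↦ ?_
  rw [SimpleGraph.comap_adj, SimpleGraph.comap_adj, hxy a ha, hxy b hb]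

variable [Fintype β]

open scoped Classical in
/-- The common neighbourhood in `G` of the images `x q`, `q ∈ Q`. -/
noncomputable def commonNeighbors (x : α → β) : Finset β :=
  {b | ∀ q ∈ Q, G.Adj (x q) b}

variable {G Q} [DecidableEq α] {u v : α}

open scoped Classical in
lemma cliqueIndicator_insert_update (hu : u ∉ Q) (x : α → β) (b : β) :
    cliqueIndicator G (insert u Q) (update x u b) =
      cliqueIndicator G Q x * if b ∈ commonNeighbors G Q x then 1 else 0 := by
  have hupd : ∀ q ∈ Q, update x u b q = x q := fun q hq ↦
    update_of_ne (ne_of_mem_of_not_mem hq hu) b x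
  have hiff : (G.comap (update x u b)).IsClique ↑(insert u Q) ↔
      (G.comap x).IsClique Q ∧ b ∈ commonNeighbors G Q x := by
    rw [coe_insert, SimpleGraph.isClique_insert_of_notMem (mod_cast hu)]
    refine and_congr (forall₄_congr fun p hp q hq ↦ ?_) ?_
    · simp only [SimpleGraph.comap_adj, hupd p hp, hupd q hq]
    · simp +contextual [commonNeighbors, hupd, G.adj_comm b]
  by_cases h₁ : (G.comap x).IsClique Q <;> by_cases h₂ : b ∈ commonNeighbors G Q x <;>
    simp only [cliqueIndicator, Set.indicator, Set.mem_ofPred_eq, hiff, h₁, h₂, and_true, and_false,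
      if_true, if_false, Pi.one_apply, mul_one, mul_zero]

lemma mem_commonNeighbors_insert_update (hu : u ∉ Q) {x : α → β} {b c : β} :
    c ∈ commonNeighbors G (insert u Q) (update x u b) ↔
      G.Adj b c ∧ c ∈ commonNeighbors G Q x := by
  have hupd : ∀ q ∈ Q, update x u b q = x q := fun q hq ↦
    update_of_ne (ne_of_mem_of_not_mem hq hu) b x
  simp +contextual [commonNeighbors, hupd]

variable (G) [Fintype α]

/-- The probability that a uniformly random map `α → β` sends `S` to a clique of `G`; it is the
homomorphism density in `G` of the complete graph on `S`. -/
noncomputable def cliqueDensity : ℝ :=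
  𝔼 x, cliqueIndicator G S x

lemma cliqueDensity_nonneg : 0 ≤ cliqueDensity G S :=
  expect_nonneg fun x _ ↦ cliqueIndicator_nonneg G S x

variable {G} [Nonempty β]

lemma cliqueDensity_insert (hu : u ∉ Q) :
    cliqueDensity G (insert u Q) =
      𝔼 x, cliqueIndicator G Q x * (#(commonNeighbors G Q x) / Fintype.card β) := by
  classical
  rw [cliqueDensity, ← expect_update u, expect_comm]
  refine expect_congr rfl fun x _ ↦ ?_
  simp only [cliqueIndicator_insert_update hu, ← mul_expect, Fintype.expect_eq_sum_div_card,
    sum_boole, filter_univ_mem]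

open scoped Classical in
lemma cliqueDensity_insert_insert (hu : u ∉ Q) (hv : v ∉ insert u Q) :
    cliqueDensity G (insert v (insert u Q)) =
      𝔼 x, cliqueIndicator G Q x *
        (#(G.interedges (commonNeighbors G Q x) (commonNeighbors G Q x)) /
          (Fintype.card β : ℝ) ^ 2) := by
  rw [cliqueDensity_insert hv, ← expect_update u, expect_comm]
  refine expect_congr rfl fun x _ ↦ ?_
  have hcount : ∑ b ∈ commonNeighbors G Q x,
      #(commonNeighbors G (insert u Q) (update x u b)) =
        #(G.interedges (commonNeighbors G Q x) (commonNeighbors G Q x)) := by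
    rw [← card_sigma]
    refine card_nbij' (fun p ↦ (p.1, p.2)) (fun p ↦ ⟨p.1, p.2⟩) ?_ ?_ ?_ ?_ <;>
      simp +contextual [Set.MapsTo, Set.LeftInvOn, SimpleGraph.mem_interedges_iff,
        mem_commonNeighbors_insert_update hu]
  simp only [cliqueIndicator_insert_update hu, mul_assoc, ← mul_expect, ite_mul, one_mul, zero_mul,
    Fintype.expect_eq_sum_div_card, sum_ite_mem, univ_inter, ← sum_div, ← hcount, Nat.cast_sum]
  rw [div_div, sq]

lemma LocallyDense.mul_cliqueDensity_sq_le {ρ d : ℝ} (hG : LocallyDense G ρ d) (hρ : 0 ≤ ρ)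
    (hd0 : 0 ≤ d) (hd1 : d ≤ 1) (hu : u ∉ Q) (hv : v ∉ insert u Q) :
    d * cliqueDensity G (insert u Q) ^ 2 ≤
      (cliqueDensity G (insert v (insert u Q)) + ρ ^ 2 * cliqueDensity G Q) *
        cliqueDensity G Q := by
  classical
  have hcauchy : cliqueDensity G (insert u Q) ^ 2 ≤
      (𝔼 x, cliqueIndicator G Q x * (#(commonNeighbors G Q x) / Fintype.card β) ^ 2) *
        cliqueDensity G Q := by
    have hsq (x : α → β) : cliqueIndicator G Q x ^ 2 = cliqueIndicator G Q x :=
      congrFun (cliqueIndicator_sq G Q) x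
    have h := expect_mul_sq_le_sq_mul_sq univ
      (fun x ↦ cliqueIndicator G Q x * (#(commonNeighbors G Q x) / Fintype.card β))
      (cliqueIndicator G Q)
    simp only [mul_pow, hsq, mul_right_comm _ _ (cliqueIndicator G Q _), ← sq] at h
    rwa [cliqueDensity_insert hu]
  calc d * cliqueDensity G (insert u Q) ^ 2
      ≤ d * ((𝔼 x, cliqueIndicator G Q x * (#(commonNeighbors G Q x) / Fintype.card β) ^ 2) *
          cliqueDensity G Q) := by gcongr
    _ = (𝔼 x, cliqueIndicator G Q x * (d * (#(commonNeighbors G Q x) / Fintype.card β) ^ 2)) *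
          cliqueDensity G Q := by
        simp only [mul_left_comm _ d, ← mul_expect, mul_assoc]
    _ ≤ (𝔼 x, cliqueIndicator G Q x * (#(G.interedges (commonNeighbors G Q x)
          (commonNeighbors G Q x)) / (Fintype.card β : ℝ) ^ 2 + ρ ^ 2)) * cliqueDensity G Q := by
        gcongr with x
        · exact cliqueDensity_nonneg G Q
        · exact cliqueIndicator_nonneg G Q x
        · exact sub_le_iff_le_add.1 (hG.mul_sq_sub_sq_le hρ hd1 _)
    _ = _ := by
        simp only [mul_add, expect_add_distrib, ← expect_mul]
        rw [cliqueDensity_insert_insert hu hv, cliqueDensity, mul_comm (ρ ^ 2)]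

end CliqueDensity

section CliqueGrowth

variable {α β : Type*} [Fintype α] [DecidableEq α] [Fintype β]

/-- A random map that sends `S` to a clique of `G` also sends `insert v S` to one with conditional
probability at least `c ^ #S`, as if the edges of `G` were independent of probability `c`. -/
def HasCliqueGrowth (α : Type*) [Fintype α] [DecidableEq α] (G : SimpleGraph β) (c : ℝ) : Prop :=
  ∀ S : Finset α, ∀ v ∉ S, c ^ #S * cliqueDensity G S ≤ cliqueDensity G (insert v S)

variable {G : SimpleGraph β} {c : ℝ}

lemma HasCliqueGrowth.pow_choose_mul_le (hG : HasCliqueGrowth α G c) (hc : 0 ≤ c)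
    {S X : Finset α} (hSX : S ⊆ X) :
    c ^ (#X).choose 2 * cliqueDensity G S ≤ c ^ (#S).choose 2 * cliqueDensity G X := by
  suffices h : ∀ R : Finset α, c ^ (#(R ∪ S)).choose 2 * cliqueDensity G S ≤
      c ^ (#S).choose 2 * cliqueDensity G (R ∪ S) by
    simpa only [union_eq_left.2 hSX] using h X
  intro R
  induction R using Finset.induction_on with
  | empty => rw [empty_union]
  | insert v R _ ih =>
    rw [insert_union]
    by_cases hv : v ∈ R ∪ S
    · rwa [insert_eq_of_mem hv]
    have hchoose : (#(insert v (R ∪ S))).choose 2 = #(R ∪ S) + (#(R ∪ S)).choose 2 := by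
      rw [card_insert_of_notMem hv, Nat.choose_succ_succ, Nat.choose_one_right]
    calc c ^ (#(insert v (R ∪ S))).choose 2 * cliqueDensity G S
        = c ^ #(R ∪ S) * (c ^ (#(R ∪ S)).choose 2 * cliqueDensity G S) := by
          rw [hchoose, pow_add, mul_assoc]
      _ ≤ c ^ #(R ∪ S) * (c ^ (#S).choose 2 * cliqueDensity G (R ∪ S)) := by gcongr
      _ = c ^ (#S).choose 2 * (c ^ #(R ∪ S) * cliqueDensity G (R ∪ S)) := mul_left_comm ..
      _ ≤ c ^ (#S).choose 2 * cliqueDensity G (insert v (R ∪ S)) := by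
          gcongr
          exact hG _ v hv

variable [Nonempty β]

lemma cliqueDensity_empty : cliqueDensity G (∅ : Finset α) = 1 := by
  simp [cliqueDensity, cliqueIndicator]

lemma cliqueDensity_singleton (v : α) : cliqueDensity G {v} = 1 := by
  simp [cliqueDensity, cliqueIndicator]

lemma HasCliqueGrowth.cliqueDensity_pos (hG : HasCliqueGrowth α G c) (hc : 0 < c)
    (S : Finset α) : 0 < cliqueDensity G S := by
  induction S using Finset.induction_on with
  | empty => exact one_pos.trans_eq cliqueDensity_empty.symm
  | insert v S hv ih => exact (mul_pos (pow_pos hc _) ih).trans_le (hG S v hv)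

lemma LocallyDense.hasCliqueGrowth {ρ d : ℝ} (hG : LocallyDense G ρ d) (hρ : 0 ≤ ρ) (hc : 0 < c)
    (hcd : c ≤ d) (hd : d ≤ 1) (hρc : ρ ^ 2 ≤ (d - c) * (c ^ Fintype.card α) ^ 2) :
    HasCliqueGrowth α G c := by
  suffices h : ∀ S : Finset α, 0 < cliqueDensity G S ∧
      ∀ v ∉ S, c ^ #S * cliqueDensity G S ≤ cliqueDensity G (insert v S) from fun S ↦ (h S).2
  intro S
  induction S using Finset.induction_on with
  | empty => simp [cliqueDensity_empty, cliqueDensity_singleton]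
  | insert u Q hu ih =>
    obtain ⟨hQ, hgrow⟩ := ih
    have hQu := hgrow u hu
    refine ⟨(mul_pos (pow_pos hc _) hQ).trans_le hQu, fun v hv ↦ ?_⟩
    have hpow : c ^ Fintype.card α ≤ c ^ #Q :=
      pow_le_pow_of_le_one hc.le (hcd.trans hd) (card_le_univ Q)
    have hcard : c ^ Fintype.card α * cliqueDensity G Q ≤ cliqueDensity G (insert u Q) :=
      (mul_le_mul_of_nonneg_right hpow hQ.le).trans hQu
    have herror : ρ ^ 2 * cliqueDensity G Q ^ 2 ≤
        (d - c) * cliqueDensity G (insert u Q) ^ 2 :=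
      calc ρ ^ 2 * cliqueDensity G Q ^ 2
          ≤ (d - c) * (c ^ Fintype.card α) ^ 2 * cliqueDensity G Q ^ 2 := by gcongr
        _ = (d - c) * (c ^ Fintype.card α * cliqueDensity G Q) ^ 2 := by ring
        _ ≤ (d - c) * cliqueDensity G (insert u Q) ^ 2 := by
          gcongr
    have hstep := hG.mul_cliqueDensity_sq_le hρ (hc.le.trans hcd) hd hu hv
    rw [card_insert_of_notMem hu, pow_succ']
    refine le_of_mul_le_mul_right ?_ hQ
    calc c * c ^ #Q * cliqueDensity G (insert u Q) * cliqueDensity G Q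
        = c * cliqueDensity G (insert u Q) * (c ^ #Q * cliqueDensity G Q) := by ring
      _ ≤ c * cliqueDensity G (insert u Q) * cliqueDensity G (insert u Q) := by
        gcongr
        exact mul_nonneg hc.le (cliqueDensity_nonneg G _)
      _ ≤ cliqueDensity G (insert v (insert u Q)) * cliqueDensity G Q := by linarith

end CliqueGrowth

section CliqueDist

variable {α β : Type*} {G : SimpleGraph β} {S X Y : Finset α}

lemma exists_perm_of_card_eq [Finite α] (hX : S ⊆ X) (hY : S ⊆ Y) (hcard : #X = #Y) :
    ∃ σ : Equiv.Perm α, (∀ v ∈ S, σ v = v) ∧ X.map σ.toEmbedding = Y := by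
  classical
  obtain ⟨e, he⟩ := Finset.exists_equiv_extend_of_card_eq (α := X) (t := Y)
    (by rw [Fintype.card_coe, hcard]) (s := S.subtype (· ∈ X)) (f := Subtype.val)
    (by simpa [subset_iff] using fun v hv _ ↦ hY hv) Subtype.val_injective.injOn
  refine ⟨e.extendSubtype, fun v hv ↦ ?_, ?_⟩
  · rw [e.extendSubtype_apply_of_mem v (hX hv)]
    exact he ⟨v, hX hv⟩ (by simpa using hv)
  · refine eq_of_subset_of_card_le (fun w hw ↦ ?_) (by rw [card_map, hcard])
    obtain ⟨v, hv, rfl⟩ := mem_map.1 hw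
    exact e.extendSubtype_mem v hv

lemma cliqueIndicator_map (σ : Equiv.Perm α) (x : α → β) :
    cliqueIndicator G (X.map σ.toEmbedding) x = cliqueIndicator G X (x ∘ σ) := by
  refine Set.indicator_eq_indicator ?_ rfl
  simp only [Set.mem_ofPred_eq, coe_map, SimpleGraph.IsClique]
  exact σ.injective.injOn.pairwise_image

variable [Fintype α] [DecidableEq α] [Fintype β]

lemma condAvg_cliqueIndicator_congr (hX : S ⊆ X) (hY : S ⊆ Y) (hcard : #X = #Y) :
    condAvg S (cliqueIndicator G X) = condAvg S (cliqueIndicator G Y) := by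
  obtain ⟨σ, hσ, rfl⟩ := exists_perm_of_card_eq hX hY hcard
  funext x
  refine (Fintype.expect_equiv (σ.arrowCongr (Equiv.refl β)) _ _ fun y ↦ ?_)
  rw [cliqueIndicator_map]
  congr 1
  funext v
  by_cases hv : v ∈ S
  · simp [hv, hσ v hv]
  · have hσv : σ v ∉ S := fun h ↦ hv (σ.injective (hσ _ h) ▸ h)
    simp [hv, hσv]

/-- The density, with respect to the uniform measure on `α → β`, of a uniformly random map among
those which send `S` to a clique of `G`. -/
noncomputable def cliqueDist (G : SimpleGraph β) (S : Finset α) : (α → β) → ℝ :=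
  (cliqueDensity G S)⁻¹ • cliqueIndicator G S

lemma cliqueDist_nonneg : 0 ≤ cliqueDist G S :=
  smul_nonneg (inv_nonneg.2 (cliqueDensity_nonneg G S)) (cliqueIndicator_nonneg G S)

lemma dependsOn_cliqueDist : DependsOn (cliqueDist G S) S := fun x y hxy ↦ by
  simp only [cliqueDist, Pi.smul_apply, dependsOn_cliqueIndicator G S hxy]

lemma isClique_of_cliqueDist_ne_zero {x : α → β} (hx : cliqueDist G S x ≠ 0) :
    (G.comap x).IsClique S :=
  Set.mem_of_indicator_ne_zero (right_ne_zero_of_mul hx)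

lemma expect_cliqueDist (hS : cliqueDensity G S ≠ 0) : 𝔼 x, cliqueDist G S x = 1 := by
  simp only [cliqueDist, Pi.smul_apply, smul_eq_mul, ← mul_expect]
  exact inv_mul_cancel₀ hS

lemma relEntropy_cliqueDist (hS : cliqueDensity G S ≠ 0) :
    relEntropy (cliqueDist G S) = -Real.log (cliqueDensity G S) := by
  have hlog (x : α → β) : cliqueDist G S x * Real.log (cliqueDist G S x) =
      cliqueDist G S x * -Real.log (cliqueDensity G S) := by
    by_cases hx : (G.comap x).IsClique S <;> simp [cliqueDist, cliqueIndicator, hx]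
  simp only [relEntropy, hlog, ← expect_mul, expect_cliqueDist hS, one_mul]

lemma isClique_of_condAvg_cliqueDist_ne_zero (hSX : S ⊆ X) {x : α → β}
    (hx : condAvg S (cliqueDist G X) x ≠ 0) : (G.comap x).IsClique S := by
  have hmul : cliqueDist G X = cliqueIndicator G S * cliqueDist G X := by
    funext x
    by_cases hxX : (G.comap x).IsClique X
    · simp [cliqueIndicator, hxX.subset (coe_subset.2 hSX)]
    · simp [cliqueDist, cliqueIndicator, hxX]
  rw [hmul, condAvg_mul_of_dependsOn (dependsOn_cliqueIndicator G S)] at hx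
  exact Set.mem_of_indicator_ne_zero (left_ne_zero_of_mul hx)

variable [Nonempty β]

lemma condAvg_cliqueDist_congr (hX : S ⊆ X) (hY : S ⊆ Y) (hcard : #X = #Y) :
    condAvg S (cliqueDist G X) = condAvg S (cliqueDist G Y) := by
  have hind := condAvg_cliqueIndicator_congr (G := G) hX hY hcard
  have hdens : cliqueDensity G X = cliqueDensity G Y := by
    rw [cliqueDensity, cliqueDensity, ← expect_condAvg S, hind, expect_condAvg]
  rw [cliqueDist, cliqueDist, condAvg_smul, condAvg_smul, hind, hdens]

lemma neg_log_cliqueDensity_le_relEntropy (hSX : S ⊆ X) (hX : cliqueDensity G X ≠ 0) :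
    -Real.log (cliqueDensity G S) ≤ relEntropy (condAvg S (cliqueDist G X)) := by
  have hexp : Real.exp (-relEntropy (condAvg S (cliqueDist G X))) ≤ cliqueDensity G S :=
    exp_neg_relEntropy_le (condAvg_nonneg S cliqueDist_nonneg)
      (by rw [expect_condAvg, expect_cliqueDist hX])
      fun x hx ↦ isClique_of_condAvg_cliqueDist_ne_zero hSX hx
  exact neg_le.1 ((Real.le_log_iff_exp_le ((Real.exp_pos _).trans_le hexp)).2 hexp)

lemma HasCliqueGrowth.relEntropy_cliqueDist_le {c : ℝ} (hG : HasCliqueGrowth α G c)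
    (hc : 0 < c) : relEntropy (cliqueDist G X) ≤ -(#X).choose 2 * Real.log c := by
  have hX := hG.cliqueDensity_pos hc X
  have hgrow := hG.pow_choose_mul_le hc.le (empty_subset X)
  rw [cliqueDensity_empty, mul_one, card_empty, Nat.choose_zero_succ, pow_zero, one_mul] at hgrow
  rw [relEntropy_cliqueDist hX.ne', neg_mul, neg_le_neg_iff, ← Real.log_pow]
  exact Real.log_le_log (by positivity) hgrow

lemma HasCliqueGrowth.relEntropy_cliqueDist_sub_le {c : ℝ} (hG : HasCliqueGrowth α G c)
    (hc : 0 < c) (hSX : S ⊆ X) :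
    relEntropy (cliqueDist G X) - relEntropy (condAvg S (cliqueDist G X)) ≤
      ((#S).choose 2 - (#X).choose 2) * Real.log c := by
  have hS := hG.cliqueDensity_pos hc S
  have hX := hG.cliqueDensity_pos hc X
  have hgrow := Real.log_le_log (by positivity) (hG.pow_choose_mul_le hc.le hSX)
  rw [Real.log_mul (by positivity) hS.ne', Real.log_mul (by positivity) hX.ne', Real.log_pow,
    Real.log_pow] at hgrow
  have hmarginal := neg_log_cliqueDensity_le_relEntropy hSX hX.ne'
  rw [relEntropy_cliqueDist hX.ne', sub_mul]
  linarith

end CliqueDist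

section EdgeCount

variable {α : Type*} {H : SimpleGraph α}

open scoped Classical in
/-- The edges of `H` with both ends in `U`. -/
noncomputable def edgesIn (H : SimpleGraph α) (U : Finset α) : Finset (Sym2 α) :=
  {e ∈ U.sym2 | e ∈ H.edgeSet}

lemma card_edgesIn_le_edgeCount [Finite α] (U : Finset α) : #(edgesIn H U) ≤ edgeCount H := by
  classical
  rw [edgeCount, Nat.card_coe_set_eq, ← Set.ncard_coe_finset]
  exact Set.ncard_le_ncard fun e he ↦ (mem_filter.1 he).2

lemma card_edgesIn_add_card_edgesIn_le [DecidableEq α] (U X : Finset α) :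
    #(edgesIn H U) + #(edgesIn H X) ≤ #(edgesIn H (U ∪ X)) + #(edgesIn H (U ∩ X)) := by
  classical
  have hunion : edgesIn H U ∪ edgesIn H X ⊆ edgesIn H (U ∪ X) :=
    union_subset (filter_subset_filter _ (sym2_mono subset_union_left))
      (filter_subset_filter _ (sym2_mono subset_union_right))
  have hinter : edgesIn H U ∩ edgesIn H X ⊆ edgesIn H (U ∩ X) := fun e he ↦ by
    simp only [edgesIn, mem_inter, mem_filter, mem_sym2_iff] at he ⊢
    exact ⟨fun v hv ↦ ⟨he.1.1 v hv, he.2.1 v hv⟩, he.1.2⟩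
  rw [← card_union_add_card_inter]
  exact add_le_add (card_le_card hunion) (card_le_card hinter)

lemma card_edgesIn_of_isClique {X : Finset α} (hX : H.IsClique X) :
    #(edgesIn H X) = (#X).choose 2 := by
  classical
  rw [← Sym2.card_image_offDiag]
  congr 1
  ext e
  induction e with | h u v =>
  simp only [edgesIn, mem_filter, mk_mem_sym2_iff, SimpleGraph.mem_edgeSet, mem_image, mem_offDiag,
    Prod.exists, uncurry_apply_pair, Sym2.eq_iff]
  constructor
  · rintro ⟨⟨hu, hv⟩, huv⟩
    exact ⟨u, v, ⟨hu, hv, huv.ne⟩, .inl ⟨rfl, rfl⟩⟩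
  · rintro ⟨a, b, ⟨ha, hb, hab⟩, ⟨rfl, rfl⟩ | ⟨rfl, rfl⟩⟩
    · exact ⟨⟨ha, hb⟩, hX ha hb hab⟩
    · exact ⟨⟨hb, ha⟩, (hX ha hb hab).symm⟩

lemma card_edgesIn_add_choose_le [DecidableEq α] {X : Finset α} (hX : H.IsClique X)
    (U : Finset α) :
    #(edgesIn H U) + (#X).choose 2 ≤ #(edgesIn H (U ∪ X)) + (#(U ∩ X)).choose 2 := by
  have hinter : H.IsClique ↑(U ∩ X) := hX.subset (coe_subset.2 inter_subset_right)
  rw [← card_edgesIn_of_isClique hX, ← card_edgesIn_of_isClique hinter]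
  exact card_edgesIn_add_card_edgesIn_le U X

end EdgeCount

section TreeDecomposition

variable {ι : Type*} {T : SimpleGraph ι}

lemma connected_induction [Fintype ι] [DecidableEq ι] (hT : T.Connected)
    {p : Finset ι → Prop} (singleton : ∀ i, p {i})
    (insert : ∀ (I : Finset ι) (i j : ι), (T.induce I).Preconnected → i ∈ I → j ∉ I → T.Adj i j →
      p I → p (insert j I)) : p univ := by
  obtain ⟨i₀⟩ := hT.nonempty
  have hi₀ : (T.induce ↑({i₀} : Finset ι)).Connected := by
    rw [coe_singleton]
    exact ⟨.of_subsingleton⟩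
  obtain ⟨I, ⟨hI, hpI⟩, hmax⟩ :=
    (Set.toFinite {I : Finset ι | (T.induce I).Connected ∧ p I}).exists_maximal
      ⟨{i₀}, hi₀, singleton i₀⟩
  suffices hIuniv : I = univ from hIuniv ▸ hpI
  by_contra hne
  obtain ⟨k, hk⟩ : ∃ k, k ∉ I := by simpa [eq_univ_iff_forall] using hne
  obtain ⟨⟨i, hi⟩⟩ := hI.nonempty
  obtain ⟨w⟩ := hT.preconnected i k
  obtain ⟨e, -, hfst, hsnd⟩ := w.exists_boundary_dart I hi hk
  have hconn : (T.induce ↑(Insert.insert e.snd I)).Connected := by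
    rw [coe_insert, Set.insert_eq]
    exact SimpleGraph.connected_induce_union .of_subsingleton hI.preconnected rfl hfst e.adj.symm
  exact hsnd (hmax ⟨hconn, insert I _ _ hI.preconnected hfst hsnd e.adj hpI⟩ (subset_insert _ _)
    (mem_insert_self _ _))

variable {α γ : Type*} [DecidableEq α] {H : SimpleGraph α} {bag : ι → Finset α}

lemma IsTreeDecomp.inter_biUnion_subset (h : IsTreeDecomp H bag T) {I : Finset ι}
    (hI : (T.induce I).Preconnected) {i j : ι} (hi : i ∈ I) (hj : j ∉ I) (hij : T.Adj i j) :
    I.biUnion bag ∩ bag j ⊆ bag i := by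
  classical
  intro v hv
  rw [mem_inter, mem_biUnion] at hv
  obtain ⟨⟨k, hk, hvk⟩, hvj⟩ := hv
  obtain ⟨p, hp⟩ := (hI ⟨i, hi⟩ ⟨k, hk⟩).exists_isPath
  let q : T.Walk i k := p.map (SimpleGraph.Embedding.induce (I : Set ι)).toHom
  have hq : q.IsPath := hp.map Subtype.val_injective
  have hjq : j ∉ q.support := fun hjq ↦ by
    obtain ⟨l, -, rfl⟩ := List.mem_map.1 (SimpleGraph.Walk.support_map _ p ▸ hjq)
    exact hj l.2
  exact h.2.2.2 j k i (q.cons hij.symm) (hq.cons hjq) (by simp) (mem_inter.2 ⟨hvj, hvk⟩)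

lemma IsJDecomp.isClique (h : IsJDecomp H (⊤ : SimpleGraph γ) bag T) (i : ι) :
    H.IsClique (bag i) := by
  obtain ⟨φ⟩ := h.2.1 i
  rw [← SimpleGraph.induce_eq_top]
  ext u v
  rw [← φ.map_adj_iff, SimpleGraph.top_adj, SimpleGraph.top_adj, φ.injective.ne_iff]

lemma IsJDecomp.card_bag_eq {J : SimpleGraph γ} (h : IsJDecomp H J bag T) (i j : ι) :
    #(bag i) = #(bag j) := by
  obtain ⟨φ⟩ := h.2.1 i
  obtain ⟨ψ⟩ := h.2.1 j
  exact card_eq_of_equiv (φ.trans ψ.symm).toEquiv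

end TreeDecomposition

section BagDensity

variable {α β ι : Type*} [Fintype α] [DecidableEq α] [Fintype β]
  {G : SimpleGraph β} {bag : ι → Finset α} {I : Finset ι} {f : (α → β) → ℝ} {i j : ι}

/-- `f` is the density, with respect to the uniform measure, of a random map from the union of the
bags `bag i`, `i ∈ I`, to `G` whose restriction to each of these bags is a uniformly random clique
of `G`. -/
structure IsBagDensity (G : SimpleGraph β) (bag : ι → Finset α) (I : Finset ι)
    (f : (α → β) → ℝ) : Prop where
  nonneg : 0 ≤ f
  dependsOn : DependsOn f (I.biUnion bag)
  condAvg_eq : ∀ i ∈ I, condAvg (bag i) f = cliqueDist G (bag i)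

namespace IsBagDensity

lemma isClique (hf : IsBagDensity G bag I f) (hi : i ∈ I) {x : α → β} (hx : f x ≠ 0) :
    (G.comap x).IsClique (bag i) := by
  refine isClique_of_cliqueDist_ne_zero ?_
  rw [← hf.condAvg_eq i hi]
  exact mt (eq_zero_of_condAvg_eq_zero hf.nonneg) hx

variable [Nonempty β]

lemma expect_eq_one (hf : IsBagDensity G bag I f) (hi : i ∈ I) (h : cliqueDensity G (bag i) ≠ 0) :
    𝔼 x, f x = 1 := by
  rw [← expect_condAvg (bag i), hf.condAvg_eq i hi, expect_cliqueDist h]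

lemma singleton (i : ι) : IsBagDensity G bag {i} (cliqueDist G (bag i)) where
  nonneg := cliqueDist_nonneg
  dependsOn := by rw [singleton_biUnion]; exact dependsOn_cliqueDist
  condAvg_eq k hk := by rw [mem_singleton.1 hk, condAvg_of_dependsOn dependsOn_cliqueDist]

lemma condAvg_inter_eq (hf : IsBagDensity G bag I f) (hi : i ∈ I) (hcard : #(bag i) = #(bag j))
    (hsub : I.biUnion bag ∩ bag j ⊆ bag i) :
    condAvg (I.biUnion bag ∩ bag j) f = condAvg (I.biUnion bag ∩ bag j) (cliqueDist G (bag j)) := by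
  rw [← condAvg_condAvg_of_subset hsub, hf.condAvg_eq i hi,
    condAvg_cliqueDist_congr hsub inter_subset_right hcard]

lemma glue [DecidableEq ι] (hf : IsBagDensity G bag I f)
    (h : condAvg (I.biUnion bag ∩ bag j) f =
      condAvg (I.biUnion bag ∩ bag j) (cliqueDist G (bag j))) :
    IsBagDensity G bag (insert j I)
      (glue (I.biUnion bag ∩ bag j) f (cliqueDist G (bag j))) where
  nonneg := glue_nonneg _ hf.nonneg cliqueDist_nonneg
  dependsOn := by
    rw [biUnion_insert, union_comm]
    exact dependsOn_glue hf.dependsOn dependsOn_cliqueDist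
  condAvg_eq k hk := by
    rcases mem_insert.1 hk with rfl | hk
    · exact condAvg_glue_right cliqueDist_nonneg hf.dependsOn dependsOn_cliqueDist h
    · rw [← condAvg_condAvg_of_subset (subset_biUnion_of_mem bag hk),
        condAvg_glue_left hf.nonneg hf.dependsOn dependsOn_cliqueDist h, hf.condAvg_eq k hk]

end IsBagDensity

variable [Nonempty β] [Fintype ι] {γ : Type*} {H : SimpleGraph α} {T : SimpleGraph ι} {c : ℝ}

lemma IsJDecomp.exists_isBagDensity (hH : IsJDecomp H (⊤ : SimpleGraph γ) bag T)
    (hG : HasCliqueGrowth α G c) (hc0 : 0 < c) (hc1 : c ≤ 1) :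
    ∃ f, IsBagDensity G bag univ f ∧
      relEntropy f ≤ -#(edgesIn H (univ.biUnion bag)) * Real.log c := by
  classical
  refine connected_induction hH.1.1.connected (p := fun I ↦ ∃ f, IsBagDensity G bag I f ∧
    relEntropy f ≤ -#(edgesIn H (I.biUnion bag)) * Real.log c)
    (fun i ↦ ⟨_, .singleton i, ?_⟩) fun I i j hI hi hj hij ⟨f, hf, hent⟩ ↦ ?_
  · rw [singleton_biUnion, card_edgesIn_of_isClique (hH.isClique i)]
    exact hG.relEntropy_cliqueDist_le hc0
  · have hmarginal := hf.condAvg_inter_eq hi (hH.card_bag_eq i j)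
      (hH.1.inter_biUnion_subset hI hi hj hij)
    refine ⟨_, hf.glue hmarginal, ?_⟩
    have hedges : (#(edgesIn H (I.biUnion bag)) + (#(bag j)).choose 2 : ℝ) ≤
        #(edgesIn H ((insert j I).biUnion bag)) + (#(I.biUnion bag ∩ bag j)).choose 2 := by
      rw [biUnion_insert, union_comm]
      exact mod_cast card_edgesIn_add_choose_le (hH.isClique j) (I.biUnion bag)
    have hstep := hG.relEntropy_cliqueDist_sub_le hc0
      (inter_subset_right : I.biUnion bag ∩ bag j ⊆ bag j)
    rw [relEntropy_glue hf.nonneg cliqueDist_nonneg hf.dependsOn dependsOn_cliqueDist hmarginal,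
      hmarginal]
    calc _ ≤ -#(edgesIn H (I.biUnion bag)) * Real.log c +
          ((#(I.biUnion bag ∩ bag j)).choose 2 - (#(bag j)).choose 2) * Real.log c := by linarith
      _ = ((#(I.biUnion bag ∩ bag j)).choose 2 -
          (#(edgesIn H (I.biUnion bag)) + (#(bag j)).choose 2)) * Real.log c := by ring
      _ ≤ -#(edgesIn H ((insert j I).biUnion bag)) * Real.log c :=
        mul_le_mul_of_nonpos_right (by linarith) (Real.log_nonpos hc0.le hc1)

end BagDensity

section HomDensity

variable {α β γ : Type*} [Fintype α] [Fintype β] {H : SimpleGraph α} {G : SimpleGraph β}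

lemma homDensity_eq_expect [DecidableEq α] (H : SimpleGraph α) (G : SimpleGraph β) :
    homDensity H G = 𝔼 x : α → β, {x | H ≤ G.comap x}.indicator 1 x := by
  classical
  let homEquiv : (H →g G) ≃ {x : α → β // H ≤ G.comap x} :=
    { toFun φ := ⟨φ, fun _ _ huv ↦ φ.map_rel huv⟩
      invFun x := ⟨x.1, fun huv ↦ x.2 huv⟩ }
  rw [homDensity, Nat.card_congr homEquiv, Nat.card_eq_fintype_card, Fintype.card_subtype,
    Fintype.expect_eq_sum_div_card, Fintype.card_fun, Nat.cast_pow]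
  simp [Set.indicator]

lemma homDensity_eq_one_of_edgeCount_eq_zero [Nonempty β] (hH : edgeCount H = 0) :
    homDensity H G = 1 := by
  classical
  have hbot : H = ⊥ := by
    rwa [edgeCount, Finite.card_eq_zero_iff, Set.isEmpty_coe_sort, SimpleGraph.edgeSet_eq_empty]
      at hH
  simp [homDensity_eq_expect, hbot]

theorem HasCliqueGrowth.pow_edgeCount_le_homDensity [DecidableEq α] [Nonempty β]
    {c : ℝ} (hG : HasCliqueGrowth α G c) (hH : JDecomposable H (⊤ : SimpleGraph γ)) (hc0 : 0 < c)
    (hc1 : c ≤ 1) : c ^ edgeCount H ≤ homDensity H G := by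
  obtain ⟨ι, _, bag, T, hT⟩ := hH
  obtain ⟨f, hf, hent⟩ := hT.exists_isBagDensity hG hc0 hc1
  obtain ⟨i⟩ := hT.1.1.connected.nonempty
  have hf1 := hf.expect_eq_one (mem_univ i) (hG.cliqueDensity_pos hc0 _).ne'
  have hsupport : support f ⊆ {x | H ≤ G.comap x} := fun x hx u v huv ↦ by
    obtain ⟨j, hu, hv⟩ := hT.1.2.2.1 u v huv
    exact hf.isClique (mem_univ j) hx hu hv huv.ne
  calc c ^ edgeCount H
      ≤ c ^ #(edgesIn H (univ.biUnion bag)) :=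
        pow_le_pow_of_le_one hc0.le hc1 (card_edgesIn_le_edgeCount _)
    _ = Real.exp (#(edgesIn H (univ.biUnion bag)) * Real.log c) := by
        rw [← Real.log_pow, Real.exp_log (by positivity)]
    _ ≤ Real.exp (-relEntropy f) := Real.exp_le_exp.2 (by linarith)
    _ ≤ homDensity H G := homDensity_eq_expect H G ▸ exp_neg_relEntropy_le hf.nonneg hf1 hsupport

end HomDensity

lemma pow_le_sub_pow_add {d ε : ℝ} (hε : 0 ≤ ε) (hεd : ε ≤ d) (hd : d ≤ 1) (n : ℕ) :
    d ^ n ≤ (d - ε) ^ n + n * ε := by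
  induction n with
  | zero => simp
  | succ n ih =>
    have hd0 := hε.trans hεd
    have hpow : (d - ε) ^ n ≤ 1 := pow_le_one₀ (sub_nonneg.2 hεd) (by linarith)
    calc d ^ (n + 1) ≤ ((d - ε) ^ n + n * ε) * d := by rw [pow_succ]; gcongr
      _ = (d - ε) ^ (n + 1) + ε * (d - ε) ^ n + n * ε * d := by ring
      _ ≤ (d - ε) ^ (n + 1) + ε * 1 + n * ε * 1 := by gcongr
      _ = (d - ε) ^ (n + 1) + (n + 1 : ℕ) * ε := by push_cast; ring

theorem LocallyDense.pow_edgeCount_sub_le_homDensity {α β γ : Type*} [Fintype α] [DecidableEq α]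
    [Fintype β] [Nonempty β] {H : SimpleGraph α} {G : SimpleGraph β}
    (hH : JDecomposable H (⊤ : SimpleGraph γ)) {d ε : ℝ} (hd0 : 0 ≤ d) (hd1 : d ≤ 1) (hε0 : 0 < ε)
    (hε1 : ε ≤ 1) (hG : LocallyDense G (ε ^ (Fintype.card α + 1)) d) :
    d ^ edgeCount H - (edgeCount H + 2) * ε ≤ homDensity H G := by
  rcases Nat.eq_zero_or_pos (edgeCount H) with he | he
  · rw [homDensity_eq_one_of_edgeCount_eq_zero he, he, pow_zero]
    exact sub_le_self _ (by positivity)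
  rcases le_or_gt d (2 * ε) with hdε | hdε
  · have hdpow : d ^ edgeCount H ≤ d := pow_le_of_le_one hd0 hd1 he.ne'
    have hhom : 0 ≤ homDensity H G := by unfold homDensity; positivity
    have he0 : 0 ≤ edgeCount H * ε := by positivity
    linarith
  · have hgrow : HasCliqueGrowth α G (d - ε) := by
      refine hG.hasCliqueGrowth (by positivity) (by linarith) (by linarith) hd1 ?_
      calc (ε ^ (Fintype.card α + 1)) ^ 2 = ε ^ 2 * (ε ^ Fintype.card α) ^ 2 := by ring
        _ ≤ ε * ((d - ε) ^ Fintype.card α) ^ 2 := by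
          gcongr
          · exact pow_le_of_le_one hε0.le hε1 two_ne_zero
          · linarith
        _ = (d - (d - ε)) * ((d - ε) ^ Fintype.card α) ^ 2 := by rw [sub_sub_cancel]
    have hcount := hgrow.pow_edgeCount_le_homDensity hH (by linarith) (by linarith)
    have hpow := pow_le_sub_pow_add hε0.le (by linarith) hd1 (edgeCount H)
    linarith

theorem stmt0_general {α γ : Type*} [Fintype α] [DecidableEq α] {H : SimpleGraph α}
    (hH : JDecomposable H (⊤ : SimpleGraph γ)) {η : ℝ} (hη : 0 < η) :
    ∃ ρ > 0, ∀ d : ℝ, 0 ≤ d → d ≤ 1 → ∀ (β : Type*) [Fintype β] [Nonempty β]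
      (G : SimpleGraph β), LocallyDense G ρ d → d ^ edgeCount H - η ≤ homDensity H G := by
  have hε : 0 < min 1 (η / (edgeCount H + 2)) := by positivity
  have hεη : (edgeCount H + 2) * min 1 (η / (edgeCount H + 2)) ≤ η :=
    (le_div_iff₀' (by positivity)).1 (min_le_right _ _)
  refine ⟨_, pow_pos hε (Fintype.card α + 1), fun d hd0 hd1 β _ _ G hG ↦ ?_⟩
  exact (sub_le_sub_left hεη _).trans
    (hG.pow_edgeCount_sub_le_homDensity hH hd0 hd1 hε (min_le_left _ _))

theorem stmt0 {α : Type*} [Fintype α] [DecidableEq α] (r : ℕ) (hr : 1 ≤ r) (H : SimpleGraph α)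
    (hH : JDecomposable H (⊤ : SimpleGraph (Fin (r + 1))))
    (η : ℝ) (hη : 0 < η) :
    ∃ (ρ : ℝ) (n₀ : ℕ), 0 < ρ ∧
      ∀ (d : ℝ), 0 < d → d ≤ 1 →
        ∀ (β : Type) [Fintype β] (G : SimpleGraph β),
          n₀ ≤ Fintype.card β → LocallyDense G ρ d →
            homDensity H G ≥ d ^ edgeCount H - η := by
  obtain ⟨ρ, hρ, h⟩ := stmt0_general hH hη
  refine ⟨ρ, 1, hρ, fun d hd0 hd1 β _ G hβ hG ↦ ?_⟩
  have : Nonempty β := Fintype.card_pos_iff.1 hβ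
  exact h d hd0.le hd1 β G hG
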